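/- Let H = Z^{2g} with symplectic basis (x_i, y_i) and let A_{g,1} ⊂ H ⊗ L_2(H) be the subgroup {Σ_{i=1}^g (x_i ⊗ [h, y_i] - y_i ⊗ [h, x_i]) : h ∈ H}. Then the composite of ν : Λ^3 H → H ⊗ L_2(H) with the projection onto (H ⊗ L_2(H))/A_{g,1} is injective. -/

import Mathlib

/-- `H = ℤ^{2g}` with basis indexed by `Fin g ⊕ Fin g` (`Sum.inl i = x_i`, `Sum.inr i = y_i`). -/
abbrev Hgrp (g : ℕ) := Fin g ⊕ Fin g → ℤ

/-- The symplectic intersection form `•` on `H`. -/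
def isym (g : ℕ) (a b : Hgrp g) : ℤ :=
  ∑ i : Fin g, (a (Sum.inl i) * b (Sum.inr i) - a (Sum.inr i) * b (Sum.inl i))
/-- The symplectic basis vectors `x_i` of `H`. -/
def xb (g : ℕ) (i : Fin g) : Hgrp g := Pi.single (Sum.inl i) 1

/-- The symplectic basis vectors `y_i` of `H`. -/
def yb (g : ℕ) (i : Fin g) : Hgrp g := Pi.single (Sum.inr i) 1

open scoped TensorProduct

/-- The wedge product `a ∧ b ∧ c` as an element of the third exterior power. -/
noncomputable def wedge3 {R M : Type*} [CommRing R] [AddCommGroup M] [Module R M]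
    (a b c : M) : ⋀[R]^3 M :=
  ⟨ExteriorAlgebra.ιMulti R 3 ![a, b, c],
    ExteriorAlgebra.ιMulti_range R 3 ⟨![a, b, c], rfl⟩⟩

/-- The wedge product `a ∧ b` as an element of the second exterior power. -/
noncomputable def wedge2 {R M : Type*} [CommRing R] [AddCommGroup M] [Module R M]
    (a b : M) : ⋀[R]^2 M :=
  ⟨ExteriorAlgebra.ιMulti R 2 ![a, b],
    ExteriorAlgebra.ιMulti_range R 2 ⟨![a, b], rfl⟩⟩

/-- The subgroup `A_{g,1} = {∑ᵢ (xᵢ ⊗ [h,yᵢ] - yᵢ ⊗ [h,xᵢ]) : h ∈ H}` of `H ⊗ L₂(H)`,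
with `L₂(H)` identified with `Λ²H` via `[x,y] ↔ x∧y`. -/
noncomputable def Ag1 (g : ℕ) : Submodule ℤ (Hgrp g ⊗[ℤ] ⋀[ℤ]^2 (Hgrp g)) :=
  Submodule.span ℤ
    {v | ∃ h : Hgrp g, v = ∑ i : Fin g,
        (xb g i ⊗ₜ wedge2 h (yb g i) - yb g i ⊗ₜ wedge2 h (xb g i))}

/-- the bilinear-alternating map `a ∧ b`, additivity and homogeneity lemmas -/
lemma w2_eq {M : Type*} [AddCommGroup M] (a b : M) :
    wedge2 (R := ℤ) a b = exteriorPower.ιMulti ℤ 2 ![a, b] := rfl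

lemma w3_eq {M : Type*} [AddCommGroup M] (a b c : M) :
    wedge3 (R := ℤ) a b c = exteriorPower.ιMulti ℤ 3 ![a, b, c] := rfl

lemma w2_add_left {M : Type*} [AddCommGroup M] (a a' b : M) :
    wedge2 (R := ℤ) (a + a') b = wedge2 a b + wedge2 a' b := by
  have u : ∀ t : M, Function.update ![a, b] 0 t = ![t, b] := fun t => by
    ext i; fin_cases i <;> rfl
  have := (exteriorPower.ιMulti ℤ 2 (M := M)).map_update_add ![a, b] 0 a a'
  rw [u, u, u] at this
  exact this

lemma w2_add_right {M : Type*} [AddCommGroup M] (a b b' : M) :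
    wedge2 (R := ℤ) a (b + b') = wedge2 a b + wedge2 a b' := by
  have u : ∀ t : M, Function.update ![a, b] 1 t = ![a, t] := fun t => by
    ext i; fin_cases i <;> rfl
  have := (exteriorPower.ιMulti ℤ 2 (M := M)).map_update_add ![a, b] 1 b b'
  rw [u, u, u] at this
  exact this

lemma w2_smul_left {M : Type*} [AddCommGroup M] (c : ℤ) (a b : M) :
    wedge2 (R := ℤ) (c • a) b = c • wedge2 a b := by
  have u : ∀ t : M, Function.update ![a, b] 0 t = ![t, b] := fun t => by
    ext i; fin_cases i <;> rfl
  have := (exteriorPower.ιMulti ℤ 2 (M := M)).map_update_smul ![a, b] 0 c a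
  rw [u, u] at this
  exact this

lemma w2_smul_right {M : Type*} [AddCommGroup M] (c : ℤ) (a b : M) :
    wedge2 (R := ℤ) a (c • b) = c • wedge2 a b := by
  have u : ∀ t : M, Function.update ![a, b] 1 t = ![a, t] := fun t => by
    ext i; fin_cases i <;> rfl
  have := (exteriorPower.ιMulti ℤ 2 (M := M)).map_update_smul ![a, b] 1 c b
  rw [u, u] at this
  exact this

lemma w2_self {M : Type*} [AddCommGroup M] (a : M) :
    wedge2 (R := ℤ) a a = 0 := by
  rw [w2_eq]
  exact (exteriorPower.ιMulti ℤ 2 (M := M)).map_eq_zero_of_eq ![a, a] (i := 0) (j := 1) rfl (by decide)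

lemma w2_swap {M : Type*} [AddCommGroup M] (a b : M) :
    wedge2 (R := ℤ) b a = - wedge2 a b := by
  have h := w2_self (a + b)
  rw [w2_add_left, w2_add_right, w2_add_right, w2_self, w2_self, zero_add, add_zero] at h
  exact eq_neg_of_add_eq_zero_right h

/-- `ν` as an alternating map. -/
noncomputable def nuAlt (M : Type*) [AddCommGroup M] : M [⋀^Fin 3]→ₗ[ℤ] (M ⊗[ℤ] ⋀[ℤ]^2 M) where
  toFun v := v 0 ⊗ₜ wedge2 (v 1) (v 2) + v 1 ⊗ₜ wedge2 (v 2) (v 0) + v 2 ⊗ₜ wedge2 (v 0) (v 1)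
  map_update_add' := by
    intro d v i x y
    obtain rfl : d = instDecidableEqFin 3 := Subsingleton.elim _ _
    fin_cases i <;> simp [w2_add_left, w2_add_right, TensorProduct.tmul_add, TensorProduct.add_tmul] <;> abel
  map_update_smul' := by
    intro d v i c x
    obtain rfl : d = instDecidableEqFin 3 := Subsingleton.elim _ _
    fin_cases i <;> simp [w2_smul_left, w2_smul_right, TensorProduct.tmul_smul, TensorProduct.smul_tmul', -zsmul_eq_mul]
  map_eq_zero_of_eq' := by
    intro v i j h hij
    fin_cases i <;> fin_cases j <;> simp at h hij <;> simp [h, w2_self] <;>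
      first
      | rw [w2_swap, TensorProduct.tmul_neg]; simp
      | skip

noncomputable def nu (M : Type*) [AddCommGroup M] : ⋀[ℤ]^3 M →ₗ[ℤ] (M ⊗[ℤ] ⋀[ℤ]^2 M) :=
  exteriorPower.alternatingMapLinearEquiv (nuAlt M)

lemma nu_wedge3 {M : Type*} [AddCommGroup M] (x y z : M) : nu M (wedge3 x y z)
    = x ⊗ₜ wedge2 y z + y ⊗ₜ wedge2 z x + z ⊗ₜ wedge2 x y := by
  rw [w3_eq, nu, exteriorPower.alternatingMapLinearEquiv_apply_ιMulti]
  rfl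

lemma hom_ext3 {M N : Type*} [AddCommGroup M] [AddCommGroup N] {f f' : ⋀[ℤ]^3 M →ₗ[ℤ] N}
    (h : ∀ x y z : M, f (wedge3 x y z) = f' (wedge3 x y z)) : f = f' := by
  apply exteriorPower.linearMap_ext
  ext v
  have := h (v 0) (v 1) (v 2)
  rw [w3_eq] at this
  have hv : ![v 0, v 1, v 2] = v := by
    ext i; fin_cases i <;> rfl
  rw [hv] at this
  simpa using this

/-- multiplication into the exterior algebra -/
noncomputable def muE (M : Type*) [AddCommGroup M] :
    (M ⊗[ℤ] ⋀[ℤ]^2 M) →ₗ[ℤ] ExteriorAlgebra ℤ M :=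
  TensorProduct.lift ((LinearMap.mul ℤ (ExteriorAlgebra ℤ M)).compl₁₂
    (ExteriorAlgebra.ι ℤ) (⋀[ℤ]^2 M).subtype)

lemma muE_tmul {M : Type*} [AddCommGroup M] (x y z : M) :
    muE M (x ⊗ₜ wedge2 y z) = ExteriorAlgebra.ι ℤ x * (ExteriorAlgebra.ι ℤ y * ExteriorAlgebra.ι ℤ z) := by
  change ExteriorAlgebra.ι ℤ x * ExteriorAlgebra.ιMulti ℤ 2 ![y, z] = _
  simp [ExteriorAlgebra.ιMulti_apply]

lemma iota_swap {M : Type*} [AddCommGroup M] (x y : M) :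
    ExteriorAlgebra.ι ℤ x * ExteriorAlgebra.ι ℤ y = - (ExteriorAlgebra.ι ℤ y * ExteriorAlgebra.ι ℤ x) :=
  eq_neg_of_add_eq_zero_left (ExteriorAlgebra.ι_add_mul_swap x y)

lemma iota_cyc {M : Type*} [AddCommGroup M] (x y z : M) :
    ExteriorAlgebra.ι ℤ y * (ExteriorAlgebra.ι ℤ z * ExteriorAlgebra.ι ℤ x)
      = ExteriorAlgebra.ι ℤ x * (ExteriorAlgebra.ι ℤ y * ExteriorAlgebra.ι ℤ z) := by
  rw [iota_swap z x, mul_neg, ← mul_assoc, iota_swap y x, neg_mul, neg_neg, mul_assoc]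

lemma muE_nu (M : Type*) [AddCommGroup M] :
    muE M ∘ₗ nu M = (3 : ℤ) • (⋀[ℤ]^3 M).subtype := by
  apply hom_ext3
  intro x y z
  rw [LinearMap.comp_apply, nu_wedge3, map_add, map_add, muE_tmul, muE_tmul, muE_tmul,
    iota_cyc x y z, ← iota_cyc z x y, LinearMap.smul_apply]
  have : (⋀[ℤ]^3 M).subtype (wedge3 x y z) =
      ExteriorAlgebra.ι ℤ x * (ExteriorAlgebra.ι ℤ y * ExteriorAlgebra.ι ℤ z) := by
    simp [wedge3, ExteriorAlgebra.ιMulti_apply]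
  rw [this]
  module

lemma nu_inj (g : ℕ) (t : ⋀[ℤ]^3 (Hgrp g)) (h : nu (Hgrp g) t = 0) : t = 0 := by
  have h3 := LinearMap.congr_fun (muE_nu (Hgrp g)) t
  rw [LinearMap.comp_apply, h, map_zero, LinearMap.smul_apply, ← map_smul] at h3
  have h4 : (3 : ℤ) • t = 0 := Subtype.ext h3.symm
  exact (smul_eq_zero.mp h4).resolve_left (by norm_num)

/-- the coordinate `a_p b_r - b_p a_r` on `Λ²` -/
noncomputable def coordAlt {ι : Type*} (p r : ι) : (ι → ℤ) [⋀^Fin 2]→ₗ[ℤ] ℤ where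
  toFun v := v 0 p * v 1 r - v 1 p * v 0 r
  map_update_add' := by
    intro d v i x y
    obtain rfl : d = instDecidableEqFin 2 := Subsingleton.elim _ _
    fin_cases i <;> simp <;> ring
  map_update_smul' := by
    intro d v i c x
    obtain rfl : d = instDecidableEqFin 2 := Subsingleton.elim _ _
    fin_cases i <;> simp <;> ring
  map_eq_zero_of_eq' := by
    intro v i j h hij
    fin_cases i <;> fin_cases j <;> simp at h hij <;> simp [h]

noncomputable def psi {ι : Type*} (p r : ι) : ((ι → ℤ) ⊗[ℤ] ⋀[ℤ]^2 (ι → ℤ)) →ₗ[ℤ] ℤ :=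
  TensorProduct.lift ((LinearMap.mul ℤ ℤ).compl₁₂
    (LinearMap.proj p) (exteriorPower.alternatingMapLinearEquiv (coordAlt p r)))

lemma psi_tmul {ι : Type*} (p r : ι) (x y z : ι → ℤ) :
    psi p r (x ⊗ₜ wedge2 y z) = x p * (y p * z r - z p * y r) := by
  change x p * exteriorPower.alternatingMapLinearEquiv (coordAlt p r)
    (exteriorPower.ιMulti ℤ 2 ![y, z]) = _
  rw [exteriorPower.alternatingMapLinearEquiv_apply_ιMulti]
  rfl

lemma psi_nu {ι : Type*} (p r : ι) : psi p r ∘ₗ nu (ι → ℤ) = 0 := by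
  apply hom_ext3
  intro x y z
  rw [LinearMap.comp_apply, nu_wedge3, map_add, map_add, psi_tmul, psi_tmul, psi_tmul]
  simp only [LinearMap.zero_apply]
  ring

/-- the generator of `A_{g,1}` attached to `h` -/
noncomputable def agen (g : ℕ) : Hgrp g →ₗ[ℤ] (Hgrp g ⊗[ℤ] ⋀[ℤ]^2 (Hgrp g)) where
  toFun h := ∑ i : Fin g, (xb g i ⊗ₜ wedge2 h (yb g i) - yb g i ⊗ₜ wedge2 h (xb g i))
  map_add' a b := by
    rw [← Finset.sum_add_distrib]
    refine Finset.sum_congr rfl fun i _ => ?_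
    rw [w2_add_left, w2_add_left, TensorProduct.tmul_add, TensorProduct.tmul_add]
    abel
  map_smul' c a := by
    rw [Finset.smul_sum]
    refine Finset.sum_congr rfl fun i _ => ?_
    rw [w2_smul_left, w2_smul_left, TensorProduct.tmul_smul, TensorProduct.tmul_smul, smul_sub]
    rfl

lemma Ag1_eq (g : ℕ) : Ag1 g = LinearMap.range (agen g) := by
  apply le_antisymm
  · refine Submodule.span_le.mpr ?_
    rintro v ⟨h, rfl⟩
    exact ⟨h, rfl⟩
  · rintro v ⟨h, rfl⟩
    exact Submodule.subset_span ⟨h, rfl⟩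

lemma psi_agen_x (g : ℕ) (h : Hgrp g) (j : Fin g) :
    psi (Sum.inl j) (Sum.inr j) (agen g h) = h (Sum.inl j) := by
  change psi _ _ (∑ i : Fin g, (xb g i ⊗ₜ wedge2 h (yb g i) - yb g i ⊗ₜ wedge2 h (xb g i))) = _
  rw [map_sum, Finset.sum_eq_single j]
  · rw [map_sub, psi_tmul, psi_tmul]
    simp [xb, yb]
  · intro i _ hi
    rw [map_sub, psi_tmul, psi_tmul]
    simp [xb, yb, hi.symm]
  · simp

lemma psi_agen_y (g : ℕ) (h : Hgrp g) (j : Fin g) :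
    psi (Sum.inr j) (Sum.inl j) (agen g h) = - h (Sum.inr j) := by
  change psi _ _ (∑ i : Fin g, (xb g i ⊗ₜ wedge2 h (yb g i) - yb g i ⊗ₜ wedge2 h (xb g i))) = _
  rw [map_sum, Finset.sum_eq_single j]
  · rw [map_sub, psi_tmul, psi_tmul]
    simp [xb, yb]
  · intro i _ hi
    rw [map_sub, psi_tmul, psi_tmul]
    simp [xb, yb, hi.symm]
  · simp

/-- The composite of `ν : Λ³H → H ⊗ L₂(H)` with the projection onto
`(H ⊗ L₂(H))/A_{g,1}` is injective. -/
theorem nu_mod_Ag1_injective (g : ℕ) :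
    ∃ ν : ⋀[ℤ]^3 (Hgrp g) →ₗ[ℤ] Hgrp g ⊗[ℤ] ⋀[ℤ]^2 (Hgrp g),
      (∀ x y z : Hgrp g, ν (wedge3 x y z)
          = x ⊗ₜ wedge2 y z + y ⊗ₜ wedge2 z x + z ⊗ₜ wedge2 x y) ∧
      Function.Injective ((Ag1 g).mkQ ∘ₗ ν) := by
  refine ⟨nu (Hgrp g), nu_wedge3, ?_⟩
  refine (injective_iff_map_eq_zero _).mpr ?_
  intro t ht
  rw [LinearMap.comp_apply, Submodule.mkQ_apply, Submodule.Quotient.mk_eq_zero, Ag1_eq] at ht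
  obtain ⟨h, hh⟩ := ht
  have key : ∀ p r, psi p r (agen g h) = 0 := fun p r => by
    rw [hh]
    exact LinearMap.congr_fun (psi_nu p r) t
  have h0 : h = 0 := by
    ext k
    rcases k with j | j
    · rw [← psi_agen_x g h j, key]; rfl
    · have := psi_agen_y g h j
      rw [key] at this
      simpa using this.symm
  apply nu_inj
  rw [← hh, h0, map_zero]
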